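/- Let α ∈ [0,2), β ∈ (0, 2−α), s₀ ∈ (0,L), R₁, R₂ ∈ SO(3), and let P : [0,1] → SO(3) be a C¹ map with P(0) = R₁ and P(1) = R₂. For h > 0 small enough that s₀ + h^β < L, set ω(h) := h^β, P⁽ʰ⁾(s) := P((s − s₀)/ω(h)), and define v⁽ʰ⁾ : Ω → ℝ³ by: v⁽ʰ⁾(s,ξ,ζ) := R₁(s, hξ, hζ)ᵀ for s < s₀; v⁽ʰ⁾(s,ξ,ζ) := ∫_{s₀}^s P⁽ʰ⁾(σ)e₁ dσ + P⁽ʰ⁾(s)(0, hξ, hζ)ᵀ + b⁽ʰ⁾ for s₀ ≤ s ≤ s₀ + ω(h); and v⁽ʰ⁾(s,ξ,ζ) := R₂(s, hξ, hζ)ᵀ + d⁽ʰ⁾ for s > s₀ + ω(h), where b⁽ʰ⁾ := R₁(s₀,0,0)ᵀ and d⁽ʰ⁾ ∈ ℝ³ is the constant making v⁽ʰ⁾ continuous across s = s₀ + ω(h). Then (with the scaled gradient ∇_h v⁽ʰ⁾ defined at every point off the two interface planes) one has lim_{h→0⁺} h^{−α} ∫_Ω dist²( (∇_h v⁽ʰ⁾)(∇_hΨ⁽ʰ⁾)⁻¹,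 SO(3) ) ds dξ dζ = 0. -/

import Mathlib

open MeasureTheory Set

noncomputable section

abbrev M3 : Type := Matrix (Fin 3) (Fin 3) ℝ

/-- The special orthogonal group `SO(3)` as a set of `3 × 3` real matrices. -/
def SO3 : Set M3 := {R : M3 | R.transpose * R = 1 ∧ R.det = 1}

/-- The Frobenius norm of a `3 × 3` real matrix. -/
def frob3 (F : M3) : ℝ := Real.sqrt (∑ i, ∑ j, (F i j) ^ 2)

/-- The Frobenius distance from a matrix to `SO(3)`. -/
def distSO3 (F : M3) : ℝ := sInf ((fun R => frob3 (F - R)) '' SO3)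

/-- The Euclidean norm on `ℝ³`. -/
def enorm3 (v : Fin 3 → ℝ) : ℝ := Real.sqrt (∑ i, (v i) ^ 2)

/-- The `3 × 3` matrix with the three given columns. -/
def colMat (a b c : Fin 3 → ℝ) : M3 :=
  Matrix.of fun i j => if j = 0 then a i else if j = 1 then b i else c i

/-- `a ⊗ e₁` : the `3 × 3` matrix whose first column is `a` and whose other columns vanish. -/
def tensE1 (a : Fin 3 → ℝ) : M3 := Matrix.of fun i j => if j = 0 then a i else 0

/-- The normal vector `ν₂(s) = R₀(s) e₂`. -/
def nu2 (R₀ : ℝ → M3) (s : ℝ) : Fin 3 → ℝ := (R₀ s).mulVec (Pi.single 1 1)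

/-- The normal vector `ν₃(s) = R₀(s) e₃`. -/
def nu3 (R₀ : ℝ → M3) (s : ℝ) : Fin 3 → ℝ := (R₀ s).mulVec (Pi.single 2 1)

/-- The parametrization `Ψ⁽ʰ⁾(s,ξ,ζ) = γ(s) + hξν₂(s) + hζν₃(s)` of the thin beam. -/
def Psih (γ : ℝ → Fin 3 → ℝ) (R₀ : ℝ → M3) (h : ℝ) (p : ℝ × ℝ × ℝ) : Fin 3 → ℝ :=
  γ p.1 + (h * p.2.1) • nu2 R₀ p.1 + (h * p.2.2) • nu3 R₀ p.1

/-- The scaled gradient `∇_h z = (∂_s z | h⁻¹ ∂_ξ z | h⁻¹ ∂_ζ z)` as a `3 × 3` matrix. -/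
def scaledGrad (h : ℝ) (z : ℝ × ℝ × ℝ → Fin 3 → ℝ) (p : ℝ × ℝ × ℝ) : M3 :=
  Matrix.of fun i j =>
    if j = 0 then deriv (fun t => z (t, p.2.1, p.2.2) i) p.1
    else if j = 1 then h⁻¹ * deriv (fun t => z (p.1, t, p.2.2) i) p.2.1
    else h⁻¹ * deriv (fun t => z (p.1, p.2.1, t) i) p.2.2

/-- The transition deformation used for intermediate scalings: rigid motion `R₁` for
`s < s₀`, a graft of the path `P` on `[s₀, s₀ + ω]`, and a rigid motion `R₂` afterwards,
with constants chosen so that the map is continuous. -/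
def vh16 (R₁ R₂ : M3) (P : ℝ → M3) (s₀ ω h : ℝ) (p : ℝ × ℝ × ℝ) : Fin 3 → ℝ :=
  if p.1 < s₀ then R₁.mulVec ![p.1, h * p.2.1, h * p.2.2]
  else if p.1 ≤ s₀ + ω then
    (∫ σ in s₀..p.1, (P ((σ - s₀) / ω)).mulVec (Pi.single 0 1)) +
      (P ((p.1 - s₀) / ω)).mulVec ![0, h * p.2.1, h * p.2.2] + R₁.mulVec ![s₀, 0, 0]
  else
    R₂.mulVec ![p.1, h * p.2.1, h * p.2.2] +
      ((∫ σ in s₀..(s₀ + ω), (P ((σ - s₀) / ω)).mulVec (Pi.single 0 1)) +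
        R₁.mulVec ![s₀, 0, 0] - R₂.mulVec ![s₀ + ω, 0, 0])

lemma SO3_entry {R : M3} (hR : R ∈ SO3) (i j : Fin 3) : |R i j| ≤ 1 := by
  have h := congrFun (congrFun hR.1 j) j
  simp only [Matrix.mul_apply, Matrix.transpose_apply, Matrix.one_apply_eq] at h
  have h1 : R i j * R i j ≤ ∑ k, R k j * R k j :=
    Finset.single_le_sum (f := fun k => R k j * R k j) (fun k _ => mul_self_nonneg _)
      (Finset.mem_univ i)
  rw [abs_le_one_iff_mul_self_le_one]
  linarith

lemma SO3_mul_transpose {Q R : M3} (hQ : Q ∈ SO3) (hR : R ∈ SO3) : Q * R.transpose ∈ SO3 := by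
  have hR' : R * R.transpose = 1 := mul_eq_one_comm.mp hR.1
  refine ⟨?_, ?_⟩
  · rw [Matrix.transpose_mul, Matrix.transpose_transpose]
    calc R * Q.transpose * (Q * R.transpose) = R * (Q.transpose * Q) * R.transpose := by
          simp only [Matrix.mul_assoc]
      _ = 1 := by rw [hQ.1, Matrix.mul_one, hR']
  · rw [Matrix.det_mul, Matrix.det_transpose, hQ.2, hR.2, mul_one]

lemma tensE1_mul_apply (a : Fin 3 → ℝ) (B : M3) (i j : Fin 3) :
    (tensE1 a * B) i j = a i * B 0 j := by
  simp [tensE1, Matrix.mul_apply]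

lemma mul_tensE1 (a : Fin 3 → ℝ) (B : M3) : B * tensE1 a = tensE1 (B.mulVec a) := by
  ext i j
  simp only [tensE1, Matrix.mul_apply, Matrix.of_apply, Matrix.mulVec, dotProduct]
  split_ifs <;> simp

lemma distSO3_nonneg (F : M3) : 0 ≤ distSO3 F := by
  apply Real.sInf_nonneg
  rintro _ ⟨R, _, rfl⟩
  exact Real.sqrt_nonneg _

lemma distSO3_sq_le (F Q : M3) (hQ : Q ∈ SO3) (k : ℝ) (hk : ∀ i j, |F i j - Q i j| ≤ k) :
    distSO3 F ^ 2 ≤ 9 * k ^ 2 := by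
  have h1 : distSO3 F ≤ frob3 (F - Q) := by
    apply csInf_le
    · refine ⟨0, ?_⟩
      rintro _ ⟨R, _, rfl⟩
      exact Real.sqrt_nonneg _
    · exact ⟨Q, hQ, rfl⟩
  have h2 : frob3 (F - Q) ^ 2 ≤ 9 * k ^ 2 := by
    unfold frob3
    rw [Real.sq_sqrt (by positivity)]
    have : ∀ i j, (F - Q) i j ^ 2 ≤ k ^ 2 := by
      intro i j
      rw [← sq_abs]
      exact pow_le_pow_left₀ (abs_nonneg _) (hk i j) 2
    calc ∑ i, ∑ j, (F - Q) i j ^ 2 ≤ ∑ i : Fin 3, ∑ j : Fin 3, k ^ 2 :=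
          Finset.sum_le_sum fun i _ => Finset.sum_le_sum fun j _ => this i j
      _ = 9 * k ^ 2 := by simp; ring
  exact (pow_le_pow_left₀ (distSO3_nonneg F) h1 2).trans h2

lemma mulVec_bound {A : M3} (hA : ∀ i j, |A i j| ≤ 1) {w : Fin 3 → ℝ} {C : ℝ}
    (hw : ∀ i, |w i| ≤ C) (i : Fin 3) : |A.mulVec w i| ≤ 3 * C := by
  have h : ∀ j, |A i j * w j| ≤ C := fun j => by
    rw [abs_mul]
    calc |A i j| * |w j| ≤ 1 * C :=
          mul_le_mul (hA i j) (hw j) (abs_nonneg _) zero_le_one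
      _ = C := one_mul C
  simp only [Matrix.mulVec, dotProduct]
  calc |∑ j, A i j * w j| ≤ ∑ j, |A i j * w j| := Finset.abs_sum_le_sum_abs _ _
    _ ≤ ∑ j : Fin 3, C := Finset.sum_le_sum fun j _ => h j
    _ = 3 * C := by simp

lemma matrix_est {R Q : M3} (hR : R ∈ SO3) (hQ : Q ∈ SO3) {w d : Fin 3 → ℝ} {C δ h : ℝ}
    (hh : 0 < h) (hC : 6 * C * h ≤ 1) (hw : ∀ i, |w i| ≤ C) (hd : ∀ i, |d i| ≤ δ) :
    distSO3 ((Q + tensE1 d) * (R + tensE1 (h • w))⁻¹) ^ 2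
      ≤ 18 * (324 * C ^ 2 + 4) * (h ^ 2 + δ ^ 2) := by
  have hR' : R * R.transpose = 1 := mul_eq_one_comm.mp hR.1
  have hRt : ∀ i j, |R.transpose i j| ≤ 1 := fun i j => SO3_entry hR j i
  obtain ⟨u, hu⟩ : ∃ u, u = R.transpose.mulVec w := ⟨_, rfl⟩
  have hub : ∀ i, |u i| ≤ 3 * C := fun i => hu ▸ mulVec_bound hRt hw i
  have hRu : R.mulVec u = w := by rw [hu, Matrix.mulVec_mulVec, hR', Matrix.one_mulVec]
  have hpos : 1 / 2 ≤ 1 + h * u 0 := by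
    have := (abs_le.mp (hub 0)).1
    nlinarith
  obtain ⟨c, hc⟩ : ∃ c, c = h / (1 + h * u 0) := ⟨_, rfl⟩
  have hne : (1 + h * u 0) ≠ 0 := by linarith
  have hc' : c * (1 + h * u 0) = h := by rw [hc]; field_simp
  have hcinv : 1 - c * u 0 = (1 + h * u 0)⁻¹ := by rw [hc]; field_simp; ring
  have hinv2 : (1 + h * u 0)⁻¹ ≤ 2 := by
    rw [inv_le_comm₀ (by linarith) (by norm_num)]; linarith
  have hinv0 : 0 ≤ (1 + h * u 0)⁻¹ := by
    apply inv_nonneg.mpr; linarith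
  have hcb : |c| ≤ 2 * h := by
    rw [hc, div_eq_mul_inv, abs_mul, abs_of_pos hh, abs_of_nonneg hinv0]
    nlinarith
  have htt : ∀ (a : Fin 3 → ℝ), tensE1 a * tensE1 u = tensE1 (u 0 • a) := by
    intro a; ext i j
    rw [tensE1_mul_apply]
    simp only [tensE1, Matrix.of_apply, Pi.smul_apply, smul_eq_mul]
    split_ifs <;> ring
  have hGinv : (R + tensE1 (h • w))⁻¹ = (1 - c • tensE1 u) * R.transpose := by
    apply Matrix.inv_eq_right_inv
    rw [← Matrix.mul_assoc]
    have : (R + tensE1 (h • w)) * (1 - c • tensE1 u) = R := by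
      rw [Matrix.mul_sub, Matrix.mul_one, Matrix.mul_smul, Matrix.add_mul, mul_tensE1, hRu, htt]
      ext i j
      simp only [tensE1, Matrix.sub_apply, Matrix.add_apply, Matrix.smul_apply, Matrix.of_apply,
        Pi.smul_apply, smul_eq_mul]
      split_ifs
      · linear_combination (-w i) * hc'
      · ring
    rw [this, hR']
  have hdiff : ∀ i j, ((Q + tensE1 d) * (R + tensE1 (h • w))⁻¹) i j - (Q * R.transpose) i j
      = ((1 + h * u 0)⁻¹ * d i - c * Q.mulVec u i) * R j 0 := by
    intro i j
    rw [hGinv, ← Matrix.mul_assoc, Matrix.mul_sub, Matrix.mul_one, Matrix.mul_smul, Matrix.add_mul,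
      mul_tensE1, htt, ← hcinv, ← Matrix.sub_apply, ← Matrix.sub_mul]
    have : Q + tensE1 d - c • (tensE1 (Q.mulVec u) + tensE1 (u 0 • d)) - Q
        = tensE1 (fun i => (1 - c * u 0) * d i - c * Q.mulVec u i) := by
      ext i j
      simp only [tensE1, Matrix.sub_apply, Matrix.add_apply, Matrix.smul_apply, Matrix.of_apply,
        Pi.smul_apply, smul_eq_mul]
      split_ifs <;> ring
    rw [this, tensE1_mul_apply, Matrix.transpose_apply]
  have hk := distSO3_sq_le ((Q + tensE1 d) * (R + tensE1 (h • w))⁻¹) (Q * R.transpose)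
    (SO3_mul_transpose hQ hR) (2 * δ + 18 * C * h) (by
      intro i j
      rw [hdiff, abs_mul]
      have h1 : |(1 + h * u 0)⁻¹ * d i| ≤ 2 * δ := by
        rw [abs_mul, abs_of_nonneg hinv0]
        exact mul_le_mul hinv2 (hd i) (abs_nonneg _) (by norm_num)
      have h2 : |c * Q.mulVec u i| ≤ 18 * C * h := by
        rw [abs_mul]
        calc |c| * |Q.mulVec u i| ≤ (2 * h) * (3 * (3 * C)) :=
              mul_le_mul hcb (mulVec_bound (SO3_entry hQ) hub i) (abs_nonneg _) (by positivity)
          _ = 18 * C * h := by ring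
      calc _ ≤ |(1 + h * u 0)⁻¹ * d i - c * Q.mulVec u i| * 1 :=
            mul_le_mul_of_nonneg_left (SO3_entry hR j 0) (abs_nonneg _)
        _ ≤ _ := by rw [mul_one]; exact (abs_sub _ _).trans (add_le_add h1 h2))
  refine hk.trans ?_
  nlinarith [sq_nonneg (2 * δ - 18 * C * h), mul_nonneg (sq_nonneg C) (sq_nonneg δ), sq_nonneg h]

lemma scaledGrad_Psih {L : ℝ} {γ : ℝ → Fin 3 → ℝ} (hγ : ContDiff ℝ 2 γ) {R₀ : ℝ → M3}
    (hR₀C1 : ∀ i j, ContDiff ℝ 1 fun s => R₀ s i j)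
    (hR₀e1 : ∀ s ∈ Icc (0:ℝ) L, (R₀ s).mulVec (Pi.single 0 1) = deriv γ s)
    {h : ℝ} (hh : 0 < h) (s x y : ℝ) (hs : s ∈ Ioo 0 L) :
    scaledGrad h (Psih γ R₀ h) (s, x, y) = R₀ s + tensE1 (h • fun i =>
      x * deriv (fun s => R₀ s i 1) s + y * deriv (fun s => R₀ s i 2) s) := by
  have hz : ∀ a b c i, Psih γ R₀ h (a, b, c) i = γ a i + h * b * R₀ a i 1 + h * c * R₀ a i 2 := by
    intro a b c i
    simp [Psih, nu2, nu3]
  have hD : ∀ i j, HasDerivAt (fun s => R₀ s i j) (deriv (fun s => R₀ s i j) s) s := fun i j =>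
    (((hR₀C1 i j).differentiable (by norm_num)) s).hasDerivAt
  have hg : ∀ i, HasDerivAt (fun s => γ s i) (R₀ s i 0) s := by
    intro i
    have h1 := hasDerivAt_pi.mp ((hγ.differentiable (by norm_num)) s).hasDerivAt i
    rw [← hR₀e1 s (Ioo_subset_Icc_self hs)] at h1
    simpa using h1
  ext i j
  simp only [scaledGrad, hz, Matrix.of_apply, Matrix.add_apply, tensE1, Pi.smul_apply, smul_eq_mul]
  fin_cases j
  · simp only [Fin.zero_eta, if_true]
    refine (((hg i).add ((hD i 1).const_mul (h * x))).add
      ((hD i 2).const_mul (h * y))).deriv.trans ?_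
    ring
  · have : HasDerivAt (fun t => γ s i + h * t * R₀ s i 1 + h * y * R₀ s i 2) (h * R₀ s i 1) x := by
      have := ((((hasDerivAt_id x).const_mul h).mul_const (R₀ s i 1)).const_add (γ s i)).add_const
        (h * y * R₀ s i 2)
      simpa using this
    simp [this.deriv, hh.ne']
  · have : HasDerivAt (fun t => γ s i + h * x * R₀ s i 1 + h * t * R₀ s i 2) (h * R₀ s i 2) y := by
      have := (((hasDerivAt_id y).const_mul h).mul_const (R₀ s i 2)).const_add
        (γ s i + h * x * R₀ s i 1)
      simpa using this
    simp [this.deriv, hh.ne']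

/-- Gradient of a map locally (in `s`) of the form `c(s) + A(s)(0,hx,hy)`. -/
lemma scaledGrad_local {h : ℝ} (hh : 0 < h) (z : ℝ × ℝ × ℝ → Fin 3 → ℝ) (s x y : ℝ)
    (c : ℝ → Fin 3 → ℝ) (A : ℝ → M3) (c' d2 d3 : Fin 3 → ℝ)
    (hz : ∀ᶠ a in nhds s, ∀ b e i, z (a, b, e) i = c a i + h * b * A a i 1 + h * e * A a i 2)
    (hc : ∀ i, HasDerivAt (fun a => c a i) (c' i) s)
    (h2 : ∀ i, HasDerivAt (fun a => A a i 1) (d2 i) s)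
    (h3 : ∀ i, HasDerivAt (fun a => A a i 2) (d3 i) s)
    (hA : ∀ i, c' i = A s i 0) :
    scaledGrad h z (s, x, y) = A s + tensE1 (fun i => h * x * d2 i + h * y * d3 i) := by
  have hzs := hz.self_of_nhds
  ext i j
  simp only [scaledGrad, Matrix.of_apply, Matrix.add_apply, tensE1]
  fin_cases j
  · simp only [Fin.zero_eta, if_true]
    have he : (fun t => z (t, x, y) i) =ᶠ[nhds s]
        fun a => c a i + h * x * A a i 1 + h * y * A a i 2 := by
      filter_upwards [hz] with a ha using ha x y i
    rw [he.deriv_eq]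
    refine (((hc i).add ((h2 i).const_mul (h * x))).add
      ((h3 i).const_mul (h * y))).deriv.trans ?_
    rw [hA]
    ring
  · have : HasDerivAt (fun t => c s i + h * t * A s i 1 + h * y * A s i 2) (h * A s i 1) x := by
      have := ((((hasDerivAt_id x).const_mul h).mul_const (A s i 1)).const_add (c s i)).add_const
        (h * y * A s i 2)
      simpa using this
    simp [hzs, this.deriv, hh.ne']
  · have : HasDerivAt (fun t => c s i + h * x * A s i 1 + h * t * A s i 2) (h * A s i 2) y := by
      have := (((hasDerivAt_id y).const_mul h).mul_const (A s i 2)).const_add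
        (c s i + h * x * A s i 1)
      simpa using this
    simp [hzs, this.deriv, hh.ne']

lemma mulVec3 (A : M3) (a b c : ℝ) (i : Fin 3) :
    A.mulVec ![a, b, c] i = A i 0 * a + A i 1 * b + A i 2 * c := by
  simp [Matrix.mulVec, dotProduct, Fin.sum_univ_three]

lemma scaledGrad_left (R₁ R₂ : M3) (P : ℝ → M3) (s₀ ω : ℝ) {h : ℝ} (hh : 0 < h) (s x y : ℝ)
    (hs : s < s₀) : scaledGrad h (vh16 R₁ R₂ P s₀ ω h) (s, x, y) = R₁ + tensE1 0 := by
  have := scaledGrad_local hh (vh16 R₁ R₂ P s₀ ω h) s x y (fun a i => R₁ i 0 * a) (fun _ => R₁)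
    (fun i => R₁ i 0) 0 0 ?_ ?_ ?_ ?_ ?_
  · rw [this]; congr 2; ext i; simp
  · filter_upwards [Iio_mem_nhds hs] with a ha b e i
    simp only [vh16, if_pos (show a < s₀ from ha), mulVec3]
    ring
  · intro i; simpa using (hasDerivAt_id s).const_mul (R₁ i 0)
  · intro i; exact hasDerivAt_const _ _
  · intro i; exact hasDerivAt_const _ _
  · intro i; rfl

lemma scaledGrad_right (R₁ R₂ : M3) (P : ℝ → M3) (s₀ ω : ℝ) (hω : 0 < ω) {h : ℝ} (hh : 0 < h)
    (s x y : ℝ)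
    (hs : s₀ + ω < s) : scaledGrad h (vh16 R₁ R₂ P s₀ ω h) (s, x, y) = R₂ + tensE1 0 := by
  have := scaledGrad_local hh (vh16 R₁ R₂ P s₀ ω h) s x y (fun a i => R₂ i 0 * a +
    ((∫ σ in s₀..(s₀ + ω), (P ((σ - s₀) / ω)).mulVec (Pi.single 0 1)) +
        R₁.mulVec ![s₀, 0, 0] - R₂.mulVec ![s₀ + ω, 0, 0]) i) (fun _ => R₂)
    (fun i => R₂ i 0) 0 0 ?_ ?_ ?_ ?_ ?_
  · rw [this]; congr 2; ext i; simp
  · filter_upwards [Ioi_mem_nhds hs] with a ha b e i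
    have ha' : s₀ + ω < a := ha
    simp only [vh16, if_neg (show ¬ a < s₀ by linarith), if_neg (show ¬ a ≤ s₀ + ω by linarith)]
    rw [Pi.add_apply (R₂.mulVec ![a, h * b, h * e]), mulVec3]
    ring
  · intro i
    have h0 : HasDerivAt (fun a => R₂ i 0 * a) (R₂ i 0) s := by
      simpa using (hasDerivAt_id s).const_mul (R₂ i 0)
    exact h0.add_const _
  · intro i; exact hasDerivAt_const _ _
  · intro i; exact hasDerivAt_const _ _
  · intro i; rfl

lemma scaledGrad_mid (R₁ R₂ : M3) (P : ℝ → M3) (hPC1 : ∀ i j, ContDiff ℝ 1 fun t => P t i j)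
    (s₀ ω : ℝ) (hω : 0 < ω) {h : ℝ} (hh : 0 < h)
    (s x y : ℝ) (hs : s₀ < s) (hs' : s < s₀ + ω) :
    scaledGrad h (vh16 R₁ R₂ P s₀ ω h) (s, x, y) = P ((s - s₀) / ω) + tensE1 (fun i =>
      h * x * (deriv (fun t => P t i 1) ((s - s₀) / ω) * (1 / ω)) +
      h * y * (deriv (fun t => P t i 2) ((s - s₀) / ω) * (1 / ω))) := by
  have hin : HasDerivAt (fun a => (a - s₀) / ω) (1 / ω) s :=
    ((hasDerivAt_id s).sub_const s₀).div_const ω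
  have hD : ∀ i j, HasDerivAt (fun a => P ((a - s₀) / ω) i j)
      (deriv (fun t => P t i j) ((s - s₀) / ω) * (1 / ω)) s := fun i j => by
    have h1 := (((hPC1 i j).differentiable (by norm_num)) ((s - s₀) / ω)).hasDerivAt
    exact h1.comp s hin
  have hcont : Continuous fun σ => (P ((σ - s₀) / ω)).mulVec (Pi.single 0 1) := by
    refine continuous_pi fun i => ?_
    simp only [Matrix.mulVec_single_one, Matrix.col_apply]
    exact (hPC1 i 0).continuous.comp (by fun_prop)
  have hint := intervalIntegral.integral_hasDerivAt_right (hcont.intervalIntegrable s₀ s)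
    (hcont.stronglyMeasurableAtFilter _ _) hcont.continuousAt
  have := scaledGrad_local hh (vh16 R₁ R₂ P s₀ ω h) s x y (fun a =>
    (∫ σ in s₀..a, (P ((σ - s₀) / ω)).mulVec (Pi.single 0 1)) + R₁.mulVec ![s₀, 0, 0])
    (fun a => P ((a - s₀) / ω))
    (fun i => P ((s - s₀) / ω) i 0) _ _ ?_ ?_ (fun i => hD i 1) (fun i => hD i 2) ?_
  · exact this
  · filter_upwards [Ioo_mem_nhds hs hs'] with a ha b e i
    simp only [vh16, if_neg (not_lt.mpr ha.1.le), if_pos ha.2.le]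
    simp only [Pi.add_apply, mulVec3]
    ring
  · intro i
    have := hasDerivAt_pi.mp (hint.add_const (R₁.mulVec ![s₀, 0, 0])) i
    simpa using this
  · intro i; rfl

lemma exists_deriv_bound (A : ℝ → M3) (hA : ∀ i j, ContDiff ℝ 1 fun s => A s i j) (a b : ℝ) :
    ∃ M, 0 ≤ M ∧ ∀ s ∈ Icc a b, ∀ i j, |deriv (fun t => A t i j) s| ≤ M := by
  have h : ∀ i j, ∃ M, ∀ s ∈ Icc a b, |deriv (fun t => A t i j) s| ≤ M := fun i j => by
    have hc : Continuous (deriv fun t => A t i j) := (hA i j).continuous_deriv (by norm_num)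
    exact isCompact_Icc.exists_bound_of_continuousOn hc.continuousOn
  choose M hM using h
  refine ⟨∑ i, ∑ j, |M i j|, by positivity, fun s hs i j => (hM i j s hs).trans ?_⟩
  refine (le_abs_self _).trans ?_
  refine (Finset.single_le_sum (f := fun j => |M i j|) (fun _ _ => abs_nonneg _)
    (Finset.mem_univ j)).trans ?_
  exact Finset.single_le_sum (f := fun i => ∑ j, |M i j|)
    (fun _ _ => Finset.sum_nonneg fun _ _ => abs_nonneg _) (Finset.mem_univ i)

lemma lin_bound {x y a b B M : ℝ} (hB : 0 ≤ B) (hx : |x| ≤ B) (hy : |y| ≤ B) (ha : |a| ≤ M)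
    (hb : |b| ≤ M) : |x * a + y * b| ≤ 2 * B * M := by
  have h1 : |x * a| ≤ B * M := by
    rw [abs_mul]; exact mul_le_mul hx ha (abs_nonneg _) hB
  have h2 : |y * b| ≤ B * M := by
    rw [abs_mul]; exact mul_le_mul hy hb (abs_nonneg _) hB
  have h3 := abs_add_le (x * a) (y * b)
  linarith

theorem intermediate_scaling_transition_energy_vanishes
    (L : ℝ) (hL : 0 < L)
    (γ : ℝ → Fin 3 → ℝ) (hγ : ContDiff ℝ 2 γ)
    (harc : ∀ s ∈ Icc (0:ℝ) L, enorm3 (deriv γ s) = 1)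
    (hγinj : InjOn γ (Icc (0:ℝ) L))
    (R₀ : ℝ → M3) (hR₀C1 : ∀ i j, ContDiff ℝ 1 fun s => R₀ s i j)
    (hR₀SO : ∀ s ∈ Icc (0:ℝ) L, R₀ s ∈ SO3)
    (hR₀e1 : ∀ s ∈ Icc (0:ℝ) L, (R₀ s).mulVec (Pi.single 0 1) = deriv γ s)
    (Dset : Set (ℝ × ℝ)) (hDopen : IsOpen Dset) (hDconn : IsConnected Dset)
    (hDbdd : Bornology.IsBounded Dset) (hDvol : volume Dset = 1)
    (α β : ℝ) (hα : 0 ≤ α) (hα2 : α < 2) (hβ : 0 < β) (hβ2 : β < 2 - α)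
    (s₀ : ℝ) (hs₀ : s₀ ∈ Ioo (0:ℝ) L)
    (R₁ R₂ : M3) (hR₁ : R₁ ∈ SO3) (hR₂ : R₂ ∈ SO3)
    (P : ℝ → M3) (hPC1 : ∀ i j, ContDiff ℝ 1 fun t => P t i j)
    (hPSO : ∀ t ∈ Icc (0:ℝ) 1, P t ∈ SO3) (hP0 : P 0 = R₁) (hP1 : P 1 = R₂) :
    Filter.Tendsto
      (fun h : ℝ => h ^ (-α) *
        ∫ p in Ioo (0:ℝ) L ×ˢ Dset,
          distSO3 (scaledGrad h (vh16 R₁ R₂ P s₀ (h ^ β) h) p *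
            (scaledGrad h (Psih γ R₀ h) p)⁻¹) ^ 2)
      (nhdsWithin 0 (Ioi 0)) (nhds 0) := by
  classical
  obtain ⟨M, hM0, hM⟩ := exists_deriv_bound R₀ hR₀C1 0 L
  obtain ⟨N, hN0, hN⟩ := exists_deriv_bound P hPC1 0 1
  obtain ⟨B, hB0, hB⟩ : ∃ B, 0 ≤ B ∧ ∀ q ∈ Dset, |q.1| ≤ B ∧ |q.2| ≤ B := by
    obtain ⟨B, hB⟩ := hDbdd.exists_norm_le
    refine ⟨|B|, abs_nonneg _, fun q hq => ?_⟩
    have := (hB q hq).trans (le_abs_self B)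
    exact ⟨(norm_fst_le q).trans this, (norm_snd_le q).trans this⟩
  obtain ⟨C, hC⟩ : ∃ C, C = 2 * B * M := ⟨_, rfl⟩
  obtain ⟨C₁, hC₁⟩ : ∃ C₁, C₁ = 2 * B * N := ⟨_, rfl⟩
  obtain ⟨K, hK⟩ : ∃ K, K = 18 * (324 * C ^ 2 + 4) := ⟨_, rfl⟩
  have hC0 : 0 ≤ C := by rw [hC]; positivity
  have hK0 : 0 ≤ K := by rw [hK]; positivity
  -- the pointwise bound
  have key : ∀ h : ℝ, 0 < h → 6 * C * h ≤ 1 → ∀ p ∈ Ioo (0:ℝ) L ×ˢ Dset, p.1 ≠ s₀ →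
      p.1 ≠ s₀ + h ^ β →
      distSO3 (scaledGrad h (vh16 R₁ R₂ P s₀ (h ^ β) h) p *
            (scaledGrad h (Psih γ R₀ h) p)⁻¹) ^ 2 ≤
      K * h ^ 2 + (Icc s₀ (s₀ + h ^ β) ×ˢ (univ : Set (ℝ × ℝ))).indicator
        (fun _ => K * (C₁ * (h / h ^ β)) ^ 2) p := by
    rintro h hh hCh ⟨s, x, y⟩ ⟨hs, hxy⟩ hne1 hne2
    have hω : 0 < h ^ β := Real.rpow_pos_of_pos hh β
    simp only at hs hxy hne1 hne2
    obtain ⟨hx, hy⟩ := hB _ hxy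
    have hsI := Ioo_subset_Icc_self hs
    rw [scaledGrad_Psih hγ hR₀C1 hR₀e1 hh s x y hs]
    have hw : ∀ i, |x * deriv (fun s => R₀ s i 1) s + y * deriv (fun s => R₀ s i 2) s| ≤ C :=
      fun i => hC ▸ lin_bound hB0 hx hy (hM s hsI i 1) (hM s hsI i 2)
    have hR := hR₀SO s hsI
    have hind : 0 ≤ (Icc s₀ (s₀ + h ^ β) ×ˢ (univ : Set (ℝ × ℝ))).indicator
        (fun _ => K * (C₁ * (h / h ^ β)) ^ 2) (s, x, y) :=
      indicator_nonneg (fun _ _ => by positivity) _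
    rcases lt_or_gt_of_ne hne1 with h1 | h1
    · rw [scaledGrad_left R₁ R₂ P s₀ _ hh s x y h1]
      have := matrix_est hR hR₁ (d := 0) (δ := 0) hh hCh hw (by simp)
      rw [← hK] at this
      refine this.trans ?_
      linarith
    · rcases lt_or_gt_of_ne hne2 with h2 | h2
      · rw [scaledGrad_mid R₁ R₂ P hPC1 s₀ _ hω hh s x y h1 h2]
        have ht : (s - s₀) / h ^ β ∈ Icc (0:ℝ) 1 := by
          constructor
          · apply div_nonneg <;> linarith
          · rw [div_le_one hω]; linarith
        have := matrix_est hR (hPSO _ ht) (δ := C₁ * (h / h ^ β)) hh hCh hw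
          (d := fun i => h * x * (deriv (fun t => P t i 1) ((s - s₀) / h ^ β) * (1 / h ^ β)) +
            h * y * (deriv (fun t => P t i 2) ((s - s₀) / h ^ β) * (1 / h ^ β))) (by
            intro i
            have e := lin_bound hB0 hx hy (hN _ ht i 1) (hN _ ht i 2)
            rw [← hC₁] at e
            have : h * x * (deriv (fun t => P t i 1) ((s - s₀) / h ^ β) * (1 / h ^ β)) +
              h * y * (deriv (fun t => P t i 2) ((s - s₀) / h ^ β) * (1 / h ^ β)) =
              (x * deriv (fun t => P t i 1) ((s - s₀) / h ^ β) +
              y * deriv (fun t => P t i 2) ((s - s₀) / h ^ β)) * (h / h ^ β) := by ring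
            simp only [this]
            rw [abs_mul, abs_of_pos (div_pos hh hω)]
            exact mul_le_mul_of_nonneg_right e (div_pos hh hω).le)
        rw [← hK] at this
        refine this.trans ?_
        rw [indicator_of_mem (by exact ⟨⟨h1.le, h2.le⟩, trivial⟩)]
        linarith
      · rw [scaledGrad_right R₁ R₂ P s₀ _ hω hh s x y h2]
        have := matrix_est hR hR₂ (d := 0) (δ := 0) hh hCh hw (by simp)
        rw [← hK] at this
        refine this.trans ?_
        linarith
  -- measure facts
  have hvolΩ : volume (Ioo (0:ℝ) L ×ˢ Dset) = ENNReal.ofReal L := by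
    rw [Measure.volume_eq_prod, Measure.prod_prod, hDvol, mul_one, Real.volume_Ioo, sub_zero]
  have hmΩ : MeasurableSet (Ioo (0:ℝ) L ×ˢ Dset) := measurableSet_Ioo.prod hDopen.measurableSet
  have hnull : ∀ a : ℝ, ∀ᵐ p ∂(volume : Measure (ℝ × ℝ × ℝ)), p.1 ≠ a := by
    intro a
    rw [ae_iff]
    have : {p : ℝ × ℝ × ℝ | ¬ p.1 ≠ a} = {a} ×ˢ univ := by
      ext p; simp
    rw [this, Measure.volume_eq_prod, Measure.prod_prod]
    simp
  haveI : IsFiniteMeasure (volume.restrict (Ioo (0:ℝ) L ×ˢ Dset)) :=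
    ⟨by rw [Measure.restrict_apply_univ, hvolΩ]; exact ENNReal.ofReal_lt_top⟩
  have intbd : ∀ h : ℝ, 0 < h → 6 * C * h ≤ 1 →
      ∫ p in Ioo (0:ℝ) L ×ˢ Dset,
          distSO3 (scaledGrad h (vh16 R₁ R₂ P s₀ (h ^ β) h) p *
            (scaledGrad h (Psih γ R₀ h) p)⁻¹) ^ 2 ≤
      L * (K * h ^ 2) + h ^ β * (K * (C₁ * (h / h ^ β)) ^ 2) := by
    intro h hh hCh
    have hω : 0 < h ^ β := Real.rpow_pos_of_pos hh β
    have hmS : MeasurableSet (Icc s₀ (s₀ + h ^ β) ×ˢ (univ : Set (ℝ × ℝ))) :=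
      measurableSet_Icc.prod MeasurableSet.univ
    have hi1 : Integrable (fun _ : ℝ × ℝ × ℝ => K * h ^ 2)
      (volume.restrict (Ioo (0:ℝ) L ×ˢ Dset)) := integrable_const _
    have hi2 : Integrable ((Icc s₀ (s₀ + h ^ β) ×ˢ (univ : Set (ℝ × ℝ))).indicator
        (fun _ => K * (C₁ * (h / h ^ β)) ^ 2)) (volume.restrict (Ioo (0:ℝ) L ×ˢ Dset)) :=
      (integrable_const _).indicator hmS
    have h1 := integral_mono_of_nonneg (μ := volume.restrict (Ioo (0:ℝ) L ×ˢ Dset))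
      (f := fun p => distSO3 (scaledGrad h (vh16 R₁ R₂ P s₀ (h ^ β) h) p *
            (scaledGrad h (Psih γ R₀ h) p)⁻¹) ^ 2)
      (g := fun p => K * h ^ 2 + (Icc s₀ (s₀ + h ^ β) ×ˢ (univ : Set (ℝ × ℝ))).indicator
        (fun _ => K * (C₁ * (h / h ^ β)) ^ 2) p)
      (Filter.Eventually.of_forall fun p => sq_nonneg _) (hi1.add hi2) (by
        filter_upwards [ae_restrict_mem hmΩ, ae_restrict_of_ae (hnull s₀),
          ae_restrict_of_ae (hnull (s₀ + h ^ β))] with p hp hp1 hp2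
        exact key h hh hCh p hp hp1 hp2)
    refine h1.trans ?_
    rw [integral_add hi1 hi2, integral_indicator_const _ hmS, integral_const, smul_eq_mul,
      smul_eq_mul]
    have e1 : (volume.restrict (Ioo (0:ℝ) L ×ˢ Dset)).real univ = L := by
      rw [measureReal_def, Measure.restrict_apply_univ, hvolΩ, ENNReal.toReal_ofReal hL.le]
    have e2 : (volume.restrict (Ioo (0:ℝ) L ×ˢ Dset)).real
        (Icc s₀ (s₀ + h ^ β) ×ˢ (univ : Set (ℝ × ℝ))) ≤ h ^ β := by
      rw [measureReal_def, Measure.restrict_apply hmS]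
      apply ENNReal.toReal_le_of_le_ofReal hω.le
      calc _ ≤ volume (Icc s₀ (s₀ + h ^ β) ×ˢ Dset) := by
            apply measure_mono
            rintro p ⟨hp, hp'⟩
            exact ⟨hp.1, hp'.2⟩
        _ = ENNReal.ofReal (h ^ β) := by
            rw [Measure.volume_eq_prod, Measure.prod_prod, hDvol, mul_one, Real.volume_Icc]
            congr 1; ring
    rw [e1]
    gcongr
  -- conclusion
  have lim : ∀ e : ℝ, 0 < e → Filter.Tendsto (fun h : ℝ => h ^ e)
      (nhdsWithin 0 (Ioi 0)) (nhds 0) := by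
    intro e he
    have : Filter.Tendsto (fun h : ℝ => h ^ e) (nhds 0) (nhds (0 ^ e)) :=
      (Real.continuousAt_rpow_const 0 e (Or.inr he.le)).tendsto
    rw [Real.zero_rpow he.ne'] at this
    exact this.mono_left nhdsWithin_le_nhds
  have hlim : Filter.Tendsto (fun h : ℝ => L * K * h ^ (2 - α) + K * C₁ ^ 2 * h ^ (2 - α - β))
      (nhdsWithin 0 (Ioi 0)) (nhds 0) := by
    have := ((lim (2 - α) (by linarith)).const_mul (L * K)).add
      ((lim (2 - α - β) (by linarith)).const_mul (K * C₁ ^ 2))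
    simpa using this
  have hsmall : ∀ᶠ h : ℝ in nhdsWithin 0 (Ioi 0), 6 * C * h ≤ 1 := by
    apply nhdsWithin_le_nhds
    have : Filter.Tendsto (fun h : ℝ => 6 * C * h) (nhds 0) (nhds (6 * C * 0)) :=
      (continuous_const.mul continuous_id).tendsto 0
    rw [mul_zero] at this
    exact this.eventually_le_const one_pos
  refine squeeze_zero' ?_ ?_ hlim
  · filter_upwards [self_mem_nhdsWithin] with h hh
    have hh' : 0 < h := hh
    exact mul_nonneg (Real.rpow_nonneg hh'.le _) (integral_nonneg fun p => sq_nonneg _)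
  · filter_upwards [self_mem_nhdsWithin, hsmall] with h hh hCh
    have hh' : 0 < h := hh
    have hω : 0 < h ^ β := Real.rpow_pos_of_pos hh' β
    refine (mul_le_mul_of_nonneg_left (intbd h hh' hCh) (Real.rpow_nonneg hh'.le _)).trans
      (le_of_eq ?_)
    have e1 : h ^ (2 - α) = h ^ (-α) * h ^ 2 := by
      rw [← Real.rpow_natCast h 2, ← Real.rpow_add hh']; congr 1; push_cast; ring
    have e2 : h ^ (2 - α - β) = h ^ (-α) * h ^ 2 / h ^ β := by
      rw [Real.rpow_sub hh', e1]
    rw [e1, e2]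
    field_simp
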